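/- arXiv:1603.07456 — 6 statements merged into one kernel-verified Lean document; each statement's English description precedes it below -/
import Mathlib

section
/- Let θ > 0, λ = 2θ, and let f : [0,∞) → ℝ be bounded and continuous. Then G_f is differentiable on (0,∞), has a right derivative at 0, and for every y > 0, (G_f)'(y) = λ·(f(y) − G_f(y)) = −λ·f(0)·e^{−λy} − λ²·e^{−λy}·∫_0^y f(u)·e^{λu} du + λ·f(y); moreover (G_f)'(0⁺) = 0. -/
open MeasureTheory Real Filter Set

/-- `G lam f y = f 0 · e^{-lam y} + lam · e^{-lam y} · ∫_0^y f(u) e^{lam u} du`. -/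
noncomputable def G (lam : ℝ) (f : ℝ → ℝ) (y : ℝ) : ℝ :=
  f 0 * Real.exp (-lam * y) +
    lam * Real.exp (-lam * y) * ∫ u in (0:ℝ)..y, f u * Real.exp (lam * u)

/-- For `f : [0,∞) → ℝ` bounded and continuous, `G_f` is differentiable on `(0,∞)` with
`(G_f)'(y) = λ(f(y) − G_f(y)) = −λ f(0) e^{−λy} − λ² e^{−λy} ∫_0^y f(u) e^{λu} du + λ f(y)`,
and has right derivative `0` at `0`. -/
theorem G_deriv (θ lam : ℝ) (hθ : 0 < θ) (hlam : lam = 2 * θ)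
    (f : ℝ → ℝ) (hfc : ContinuousOn f (Set.Ici 0))
    (C : ℝ) (hfb : ∀ x, 0 ≤ x → |f x| ≤ C) :
    (∀ y : ℝ, 0 < y → HasDerivAt (G lam f) (lam * (f y - G lam f y)) y) ∧
    (∀ y : ℝ, 0 < y →
      lam * (f y - G lam f y) =
        -lam * f 0 * Real.exp (-lam * y)
          - lam ^ 2 * Real.exp (-lam * y) * (∫ u in (0:ℝ)..y, f u * Real.exp (lam * u))
          + lam * f y) ∧
    HasDerivWithinAt (G lam f) 0 (Set.Ici 0) 0 := by
  have hg : Continuous (fun x => f (max x 0)) :=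
    hfc.comp_continuous (by fun_prop) (fun x => le_max_right x 0)
  have hGg : ∀ y, 0 ≤ y → G lam f y = G lam (fun x => f (max x 0)) y := by
    intro y hy
    have : (∫ u in (0:ℝ)..y, f u * Real.exp (lam * u))
        = ∫ u in (0:ℝ)..y, f (max u 0) * Real.exp (lam * u) := by
      apply intervalIntegral.integral_congr
      intro u hu
      rw [Set.uIcc_of_le hy] at hu
      simp only [max_eq_left hu.1]
    simp only [G, this, max_self]
  have key : ∀ y, HasDerivAt (G lam (fun x => f (max x 0)))
      (lam * (f (max y 0) - G lam (fun x => f (max x 0)) y)) y := by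
    intro y
    have hc : Continuous (fun u => f (max u 0) * Real.exp (lam * u)) := hg.mul (by fun_prop)
    have h1 : HasDerivAt (fun y => ∫ u in (0:ℝ)..y, f (max u 0) * Real.exp (lam * u))
        (f (max y 0) * Real.exp (lam * y)) y :=
      intervalIntegral.integral_hasDerivAt_right (hc.intervalIntegrable _ _)
        hc.stronglyMeasurable.stronglyMeasurableAtFilter hc.continuousAt
    have h2 : HasDerivAt (fun y => Real.exp (-lam * y)) (Real.exp (-lam * y) * (-lam * 1)) y :=
      ((hasDerivAt_id y).const_mul (-lam)).exp
    have h3 := (h2.const_mul (f (max 0 0))).add ((h2.const_mul lam).mul h1)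
    have he : Real.exp (-lam * y) * Real.exp (lam * y) = 1 := by
      rw [← Real.exp_add]; simp
    refine HasDerivAt.congr_deriv (f := G lam (fun x => f (max x 0))) h3 ?_
    simp only [G]
    linear_combination lam * f (max y 0) * he
  refine ⟨fun y hy => ?_, fun y hy => ?_, ?_⟩
  · have h := key y
    rw [← hGg y hy.le, max_eq_left hy.le] at h
    refine h.congr_of_eventuallyEq ?_
    filter_upwards [lt_mem_nhds hy] with z hz
    exact hGg z hz.le
  · simp only [G]; ring
  · have h := (key 0).hasDerivWithinAt (s := Set.Ici 0)
    have h0 : lam * (f (max 0 0) - G lam (fun x => f (max x 0)) 0) = 0 := by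
      simp [G]
    rw [h0] at h
    exact h.congr (fun z hz => hGg z hz) (hGg 0 le_rfl)
end

section
/- Let θ > 0, λ = 2θ, and let f ∈ 𝒟(𝒜). Then G_f belongs to the class 𝒟, that is: G_f is continuous on [0,∞), twice continuously differentiable on (0,∞), (G_f)'(0⁺) = 0, (G_f)''(0⁺) exists and is finite, and lim_{x→∞} G_f(x) = 0. -/
open MeasureTheory Real Filter Set

/-- `f ∈ 𝒟(𝒜)`: `f` is C² on `(0,∞)`, continuous on `[0,∞)` with `lim_{x→∞} f(x) = 0`,
the one-sided limits `f'(0⁺)` and `f''(0⁺)` exist, `f''(0⁺) = 2θ f'(0⁺)`, and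
`lim_{x→∞} f''(x) = 0`. -/
def memDA (θ : ℝ) (f : ℝ → ℝ) : Prop :=
  ContDiffOn ℝ 2 f (Set.Ioi 0) ∧ ContinuousOn f (Set.Ici 0) ∧
  Filter.Tendsto f Filter.atTop (nhds 0) ∧
  (∃ L M : ℝ, Filter.Tendsto (deriv f) (nhdsWithin 0 (Set.Ioi 0)) (nhds L) ∧
    Filter.Tendsto (deriv (deriv f)) (nhdsWithin 0 (Set.Ioi 0)) (nhds M) ∧
    M = 2 * θ * L) ∧
  Filter.Tendsto (deriv (deriv f)) Filter.atTop (nhds 0)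

lemma aux_upper (lam : ℝ) (hl : 0 < lam) (f g : ℝ → ℝ)
    (hg : ∀ y, 0 < y → HasDerivAt g (lam * (f y - g y)) y)
    (hf : Tendsto f atTop (nhds 0)) (ε : ℝ) (hε : 0 < ε) :
    ∀ᶠ y in atTop, g y < 2 * ε := by
  obtain ⟨N, hN⟩ := eventually_atTop.1 ((hf.eventually (gt_mem_nhds hε)).and (eventually_gt_atTop 0))
  have hN0 : 0 < N := (hN N le_rfl).2
  have hd : ∀ y, 0 < y → HasDerivAt (fun y => Real.exp (lam * y) * (g y - ε))
      (Real.exp (lam * y) * (lam * (f y - ε))) y := by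
    intro y hy
    have h1 : HasDerivAt (fun y => Real.exp (lam * y)) (Real.exp (lam * y) * (lam * 1)) y :=
      ((hasDerivAt_id y).const_mul lam).exp
    refine (h1.mul ((hg y hy).sub_const ε)).congr_deriv ?_
    ring
  have hanti : AntitoneOn (fun y => Real.exp (lam * y) * (g y - ε)) (Ici N) := by
    apply antitoneOn_of_deriv_nonpos (convex_Ici N)
    · intro y hy
      exact (hd y (hN0.trans_le hy)).continuousAt.continuousWithinAt
    · intro y hy
      rw [interior_Ici] at hy
      exact (hd y (hN0.trans hy)).differentiableAt.differentiableWithinAt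
    · intro y hy
      rw [interior_Ici] at hy
      rw [(hd y (hN0.trans hy)).deriv]
      have := (hN y (le_of_lt hy)).1
      have h2 : lam * (f y - ε) ≤ 0 := mul_nonpos_of_nonneg_of_nonpos hl.le (by linarith)
      exact mul_nonpos_of_nonneg_of_nonpos (Real.exp_pos _).le h2
  have hlim : Tendsto (fun y => ε * Real.exp (lam * y)) atTop atTop :=
    (Real.tendsto_exp_atTop.comp (tendsto_id.const_mul_atTop hl)).const_mul_atTop hε
  filter_upwards [eventually_ge_atTop N,
    hlim.eventually_gt_atTop (Real.exp (lam * N) * (g N - ε))] with y hy hy2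
  have h3 : Real.exp (lam * y) * (g y - ε) ≤ Real.exp (lam * N) * (g N - ε) :=
    hanti (mem_Ici.2 le_rfl) hy hy
  have h4 : Real.exp (lam * y) * (g y - ε) < Real.exp (lam * y) * ε := by linarith
  have := lt_of_mul_lt_mul_left h4 (Real.exp_pos _).le
  linarith

lemma aux_G (lam : ℝ) (f : ℝ → ℝ) (hf : ContinuousOn f (Ici 0)) :
    ContinuousOn (G lam f) (Ici 0) ∧
    ∀ y, 0 < y → HasDerivAt (G lam f) (lam * (f y - G lam f y)) y := by
  set F : ℝ → ℝ := fun x => f (max x 0) with hF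
  have hFc : Continuous F :=
    hf.comp_continuous (by fun_prop) (fun x => mem_Ici.2 (le_max_right _ _))
  have heq : ∀ y, 0 ≤ y → G lam f y = G lam F y := by
    intro y hy
    have : ∫ u in (0:ℝ)..y, f u * Real.exp (lam * u) =
        ∫ u in (0:ℝ)..y, F u * Real.exp (lam * u) := by
      apply intervalIntegral.integral_congr
      intro u hu
      rw [uIcc_of_le hy] at hu
      simp [hF, max_eq_left hu.1]
    simp only [G, this]
    simp [hF]
  have hgc : Continuous (fun u => F u * Real.exp (lam * u)) := by fun_prop
  have hd : ∀ y, HasDerivAt (G lam F) (lam * (F y - G lam F y)) y := by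
    intro y
    have hI : HasDerivAt (fun y => ∫ u in (0:ℝ)..y, F u * Real.exp (lam * u))
        (F y * Real.exp (lam * y)) y := hgc.integral_hasStrictDerivAt 0 y |>.hasDerivAt
    have hE : HasDerivAt (fun y => Real.exp (-lam * y)) (Real.exp (-lam * y) * (-lam * 1)) y :=
      ((hasDerivAt_id y).const_mul (-lam)).exp
    refine ((hE.const_mul (F 0)).add ((hE.const_mul lam).mul hI)).congr_deriv ?_
    have h1 : Real.exp (-lam * y) * Real.exp (lam * y) = 1 := by
      rw [← Real.exp_add]; simp
    simp only [G]
    linear_combination (lam * F y) * h1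
  refine ⟨?_, ?_⟩
  · have : Continuous (G lam F) := continuous_iff_continuousAt.2 fun y => (hd y).continuousAt
    exact this.continuousOn.congr fun y hy => heq y hy
  · intro y hy
    have h := hd y
    rw [← heq y hy.le, show F y = f y by simp [hF, max_eq_left hy.le]] at h
    refine h.congr_of_eventuallyEq ?_
    filter_upwards [lt_mem_nhds hy] with z hz using heq z hz.le

/-- For `f ∈ 𝒟(𝒜)`, the function `G_f` belongs to the class `𝒟`: it is continuous on `[0,∞)`,
twice continuously differentiable on `(0,∞)`, `(G_f)'(0⁺) = 0`, `(G_f)''(0⁺)` exists and is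
finite, and `lim_{x→∞} G_f(x) = 0`. -/
theorem G_mem_D (θ lam : ℝ) (hθ : 0 < θ) (hlam : lam = 2 * θ)
    (f : ℝ → ℝ) (hf : memDA θ f) :
    ContinuousOn (G lam f) (Set.Ici 0) ∧
    ContDiffOn ℝ 2 (G lam f) (Set.Ioi 0) ∧
    Filter.Tendsto (deriv (G lam f)) (nhdsWithin 0 (Set.Ioi 0)) (nhds 0) ∧
    (∃ M : ℝ, Filter.Tendsto (deriv (deriv (G lam f))) (nhdsWithin 0 (Set.Ioi 0)) (nhds M)) ∧
    Filter.Tendsto (G lam f) Filter.atTop (nhds 0) := by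
  obtain ⟨hC2, hc, hlim, ⟨L, M, hL, -, -⟩, -⟩ := hf
  have hl : 0 < lam := by linarith
  obtain ⟨hGc, hGd⟩ := aux_G lam f hc
  have hG0 : G lam f 0 = f 0 := by simp [G]
  have hder : ∀ y ∈ Ioi (0:ℝ), deriv (G lam f) y = lam * (f y - G lam f y) :=
    fun y hy => (hGd y hy).deriv
  have hdiff : DifferentiableOn ℝ (G lam f) (Ioi 0) :=
    fun y hy => (hGd y hy).differentiableAt.differentiableWithinAt
  have h1 : Tendsto (deriv (G lam f)) (nhdsWithin 0 (Ioi 0)) (nhds 0) := by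
    have ha : Tendsto f (nhdsWithin 0 (Ioi 0)) (nhds (f 0)) :=
      (hc 0 (mem_Ici.2 le_rfl)).mono_left (nhdsWithin_mono _ Ioi_subset_Ici_self)
    have hb : Tendsto (G lam f) (nhdsWithin 0 (Ioi 0)) (nhds (G lam f 0)) :=
      (hGc 0 (mem_Ici.2 le_rfl)).mono_left (nhdsWithin_mono _ Ioi_subset_Ici_self)
    have hab := (ha.sub hb).const_mul lam
    rw [hG0, sub_self, mul_zero] at hab
    refine hab.congr' ?_
    filter_upwards [self_mem_nhdsWithin] with y hy using (hder y hy).symm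
  refine ⟨hGc, ?_, h1, ⟨lam * (L - 0), ?_⟩, ?_⟩
  · have hC1 : ContDiffOn ℝ 1 (G lam f) (Ioi 0) := by
      rw [show (1 : WithTop ℕ∞) = 0 + 1 by norm_num, contDiffOn_succ_iff_deriv_of_isOpen isOpen_Ioi]
      refine ⟨hdiff, by simp, ?_⟩
      rw [contDiffOn_zero]
      refine ContinuousOn.congr ?_ hder
      exact continuousOn_const.mul (hC2.continuousOn.sub hdiff.continuousOn)
    rw [show (2 : WithTop ℕ∞) = 1 + 1 by norm_num, contDiffOn_succ_iff_deriv_of_isOpen isOpen_Ioi]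
    refine ⟨hdiff, by simp, ?_⟩
    refine ContDiffOn.congr ?_ hder
    exact contDiffOn_const.mul ((hC2.of_le (by norm_num)).sub hC1)
  · refine ((hL.sub h1).const_mul lam).congr' ?_
    filter_upwards [self_mem_nhdsWithin] with y hy
    have hfd : DifferentiableAt ℝ f y :=
      (hC2.differentiableOn (by norm_num)).differentiableAt (Ioi_mem_nhds hy)
    have hE : deriv (G lam f) =ᶠ[nhds y] fun y => lam * (f y - G lam f y) := by
      filter_upwards [Ioi_mem_nhds hy] with z hz using hder z hz
    rw [hE.deriv_eq]
    have h5 := (hfd.hasDerivAt.sub (hGd y hy).differentiableAt.hasDerivAt).const_mul lam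
    exact h5.deriv.symm
  · rw [Metric.tendsto_nhds]
    intro ε hε
    have hu := aux_upper lam hl f (G lam f) hGd hlim (ε / 2) (by linarith)
    have hv := aux_upper lam hl (fun y => - f y) (fun y => - G lam f y)
      (fun y hy => (hGd y hy).neg.congr_deriv (by ring)) (by simpa using hlim.neg)
      (ε / 2) (by linarith)
    filter_upwards [hu, hv] with y h2 h3
    rw [Real.dist_eq, sub_zero, abs_lt]
    constructor <;> linarith
end

section
/- Let θ > 0, λ = 2θ, let f : [0,∞) → ℝ be bounded and continuous, and let a ∈ ℝ and m > 0 satisfy a + m ≥ 0. Define h : [0,∞) → ℝ by h(z) = f(z + a) for z > m and h(z) = G_f(a + m) for 0 ≤ z ≤ m. Then for every y ≥ 0, G_h(y) = G_f(max(y, m) + a). (This is the deterministic identity underlying the flow property of the kernel K: given y ≥ 0, the function y ↦ e^{λy}·G_f(max(y,m)+a) has derivative λ·e^{λy}·h(y) at every y ≠ m.) -/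
open MeasureTheory Real Filter Set

/-- The deterministic identity underlying the flow property of the kernel `K`:
for `f` bounded and continuous on `[0,∞)`, `a ∈ ℝ`, `m > 0` with `a + m ≥ 0`, and
`h(z) = f(z+a)` for `z > m`, `h(z) = G_f(a+m)` for `0 ≤ z ≤ m`, one has
`G_h(y) = G_f(max(y,m) + a)` for every `y ≥ 0`; indeed the function
`y ↦ e^{λy}·G_f(max(y,m)+a)` has derivative `λ·e^{λy}·h(y)` at every `y ≠ m`. -/
theorem G_flow_identity (θ lam : ℝ) (hθ : 0 < θ) (hlam : lam = 2 * θ)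
    (f : ℝ → ℝ) (hfc : ContinuousOn f (Set.Ici 0))
    (C : ℝ) (hfb : ∀ x, 0 ≤ x → |f x| ≤ C)
    (a m : ℝ) (hm : 0 < m) (ham : 0 ≤ a + m)
    (h : ℝ → ℝ)
    (hh1 : ∀ z : ℝ, m < z → h z = f (z + a))
    (hh2 : ∀ z : ℝ, 0 ≤ z → z ≤ m → h z = G lam f (a + m)) :
    (∀ y : ℝ, 0 ≤ y → G lam h y = G lam f (max y m + a)) ∧
    (∀ y : ℝ, 0 ≤ y → y ≠ m →
      HasDerivAt (fun z : ℝ => Real.exp (lam * z) * G lam f (max z m + a))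
        (lam * Real.exp (lam * y) * h y) y) := by
  have hl : lam ≠ 0 := by rw [hlam]; positivity
  have hcont : ContinuousOn (fun u => f u * Real.exp (lam * u)) (Set.Ici 0) :=
    hfc.mul (by fun_prop)
  have hint : ∀ p q : ℝ, 0 ≤ p → 0 ≤ q →
      IntervalIntegrable (fun u => f u * Real.exp (lam * u)) volume p q := by
    intro p q hp hq
    apply ContinuousOn.intervalIntegrable
    apply hcont.mono
    intro x hx
    exact le_trans (le_min hp hq) hx.1
  have hconst : ∀ y : ℝ, 0 ≤ y → y ≤ m →
      IntervalIntegrable (fun u => h u * Real.exp (lam * u)) volume 0 y ∧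
      lam * ∫ u in (0:ℝ)..y, h u * Real.exp (lam * u) =
        G lam f (a + m) * (Real.exp (lam * y) - 1) := by
    intro y hy hym
    have hcg : Set.EqOn (fun u => G lam f (a + m) * Real.exp (lam * u))
        (fun u => h u * Real.exp (lam * u)) (Set.uIcc 0 y) := by
      intro x hx
      rw [Set.uIcc_of_le hy] at hx
      simp only [hh2 x hx.1 (hx.2.trans hym)]
    refine ⟨?_, ?_⟩
    · apply ContinuousOn.intervalIntegrable
      apply ContinuousOn.congr _ hcg.symm
      fun_prop
    · rw [← intervalIntegral.integral_congr hcg, intervalIntegral.integral_const_mul,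
        intervalIntegral.integral_comp_mul_left (fun x => Real.exp x) hl, integral_exp]
      simp only [smul_eq_mul, mul_zero, Real.exp_zero]
      field_simp
  have hh0 : h 0 = G lam f (a + m) := hh2 0 le_rfl hm.le
  have hexp : ∀ y : ℝ, Real.exp (-lam * y) * Real.exp (lam * y) = 1 := by
    intro y
    rw [← Real.exp_add]; simp
  constructor
  · intro y hy
    rcases le_total y m with hym | hym
    · rw [max_eq_right hym, add_comm m a]
      have e := (hconst y hy hym).2
      have e2 := hexp y
      rw [G, hh0]
      linear_combination Real.exp (-lam * y) * e + G lam f (a + m) * e2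
    · rw [max_eq_left hym]
      obtain ⟨i1, e1⟩ := hconst m hm.le le_rfl
      have hcg : Set.EqOn (fun u => Real.exp (-lam * a) *
          (fun v => f v * Real.exp (lam * v)) (u + a))
          (fun u => h u * Real.exp (lam * u)) (Set.uIoc m y) := by
        intro x hx
        rw [Set.uIoc_of_le hym] at hx
        have : Real.exp (lam * (x + a)) = Real.exp (lam * x) * Real.exp (lam * a) := by
          rw [← Real.exp_add]; ring_nf
        simp only [hh1 x hx.1, this]
        linear_combination f (x + a) * Real.exp (lam * x) * hexp a
      have i2 : IntervalIntegrable (fun u => h u * Real.exp (lam * u)) volume m y := by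
        refine IntervalIntegrable.congr hcg ?_
        apply ContinuousOn.intervalIntegrable
        apply ContinuousOn.mul (by fun_prop)
        apply hcont.comp (by fun_prop)
        intro x hx
        rw [Set.uIcc_of_le hym] at hx
        have := hx.1
        simp only [Set.mem_Ici]; linarith
      have e2 : ∫ u in m..y, h u * Real.exp (lam * u) = Real.exp (-lam * a) *
          ((∫ u in (0:ℝ)..(y + a), f u * Real.exp (lam * u)) -
            ∫ u in (0:ℝ)..(a + m), f u * Real.exp (lam * u)) := by
        rw [← intervalIntegral.integral_congr_ae (Filter.Eventually.of_forall hcg),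
          intervalIntegral.integral_const_mul,
          intervalIntegral.integral_comp_add_right (fun v => f v * Real.exp (lam * v)),
          intervalIntegral.integral_interval_sub_left (hint _ _ le_rfl (by linarith))
            (hint _ _ le_rfl ham), add_comm m a]
      have e3 := intervalIntegral.integral_add_adjacent_intervals i1 i2
      rw [G, hh0, ← e3, e2, mul_add,
        show lam * Real.exp (-lam * y) * (∫ u in (0:ℝ)..m, h u * Real.exp (lam * u)) =
          Real.exp (-lam * y) * (G lam f (a + m) * (Real.exp (lam * m) - 1)) by
            rw [← e1]; ring]
      simp only [G]
      have x1 : Real.exp (-lam * (a + m)) = Real.exp (-lam * a) * Real.exp (-lam * m) := by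
        rw [← Real.exp_add]; ring_nf
      have x2 : Real.exp (-lam * (y + a)) = Real.exp (-lam * a) * Real.exp (-lam * y) := by
        rw [← Real.exp_add]; ring_nf
      rw [x1, x2]
      linear_combination Real.exp (-lam * y) * Real.exp (-lam * a) *
        (f 0 + lam * ∫ u in (0:ℝ)..(a + m), f u * Real.exp (lam * u)) * hexp m
  · intro y hy hne
    have hE : HasDerivAt (fun z : ℝ => Real.exp (lam * z)) (lam * Real.exp (lam * y)) y := by
      have := ((hasDerivAt_id y).const_mul lam).exp
      simpa [mul_comm] using this
    rcases lt_or_gt_of_ne hne with hym | hym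
    · rw [hh2 y hy hym.le]
      refine (hE.mul_const (G lam f (a + m))).congr_of_eventuallyEq ?_
      filter_upwards [Iio_mem_nhds hym] with z hz
      rw [max_eq_right (le_of_lt hz), add_comm m a]
    · rw [hh1 y hym]
      have hpos : 0 < y + a := by linarith
      have hd : HasDerivAt (fun z => ∫ u in (0:ℝ)..z, f u * Real.exp (lam * u))
          (f (y + a) * Real.exp (lam * (y + a))) (y + a) := by
        apply intervalIntegral.integral_hasDerivAt_right (hint _ _ le_rfl hpos.le)
        · exact (hcont.mono Set.Ioi_subset_Ici_self).stronglyMeasurableAtFilter isOpen_Ioi _ hpos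
        · exact hcont.continuousAt (Ici_mem_nhds hpos)
      have hd2 := (((hd.comp_add_const y a).const_mul lam).const_add (f 0)).const_mul
        (Real.exp (-lam * a))
      have x1 : ∀ z, Real.exp (lam * (z + a)) = Real.exp (lam * z) * Real.exp (lam * a) := by
        intro z
        rw [← Real.exp_add]; ring_nf
      refine (hd2.congr_of_eventuallyEq ?_).congr_deriv ?_
      · filter_upwards [Ioi_mem_nhds hym] with z hz
        rw [max_eq_left (le_of_lt hz), G]
        have x2 : Real.exp (-lam * (z + a)) = Real.exp (-lam * a) * Real.exp (-lam * z) := by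
          rw [← Real.exp_add]; ring_nf
        rw [x2]
        linear_combination Real.exp (-lam * a) *
          (f 0 + lam * ∫ u in (0:ℝ)..(z + a), f u * Real.exp (lam * u)) * hexp z
      · rw [x1]
        linear_combination lam * f (y + a) * Real.exp (lam * y) * hexp a
end

section
/- Let θ > 0 and t > 0. Then for every x ∈ ℝ, g_t''(x) = 2θ·g_t'(x) + 2θ·(x/√(2π t³))·exp(−x²/(2t)). -/
open MeasureTheory Real Filter Set

/-- Complementary error function `erfc(x) = (2/√π)·∫_x^∞ e^{−y²} dy`. -/
noncomputable def erfc (x : ℝ) : ℝ :=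
  (2 / Real.sqrt Real.pi) * ∫ y in Set.Ioi x, Real.exp (-y ^ 2)

/-- `g_t(x) = θ·exp(2θx + 2θ²t)·erfc(x/√(2t) + θ·√(2t))`. -/
noncomputable def gfun (θ t x : ℝ) : ℝ :=
  θ * Real.exp (2 * θ * x + 2 * θ ^ 2 * t) *
    erfc (x / Real.sqrt (2 * t) + θ * Real.sqrt (2 * t))

lemma erfc_hasDerivAt_aux (x : ℝ) :
    HasDerivAt erfc ((2 / Real.sqrt Real.pi) * (-Real.exp (-x ^ 2))) x := by
  have hint : Integrable (fun y : ℝ => Real.exp (-y ^ 2)) := by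
    simpa using integrable_exp_neg_mul_sq (b := 1) one_pos
  have hc : Continuous (fun y : ℝ => Real.exp (-y ^ 2)) := by fun_prop
  have h1 : erfc = fun x => (2 / Real.sqrt Real.pi) *
      ((∫ y in Set.Ioi (0:ℝ), Real.exp (-y ^ 2)) - ∫ y in (0:ℝ)..x, Real.exp (-y ^ 2)) := by
    funext z
    have := intervalIntegral.integral_interval_add_Ioi (a := 0) (b := z)
      (hint.integrableOn) (hint.integrableOn)
    unfold erfc
    rw [← this]
    ring
  rw [h1]
  have h2 := intervalIntegral.integral_hasDerivAt_right (hc.intervalIntegrable 0 x)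
    (hc.stronglyMeasurableAtFilter _ _) hc.continuousAt
  exact (h2.const_sub _).const_mul _

lemma gfun_hasDerivAt_aux (θ t : ℝ) (ht : 0 < t) (x : ℝ) :
    HasDerivAt (gfun θ t) (2 * θ * gfun θ t x
      - 2 * θ / (Real.sqrt Real.pi * Real.sqrt (2 * t)) * Real.exp (-x ^ 2 / (2 * t))) x := by
  have hs : 0 < Real.sqrt (2 * t) := Real.sqrt_pos.2 (by linarith)
  have hs2 : Real.sqrt (2 * t) ^ 2 = 2 * t := Real.sq_sqrt (by linarith)
  have hp : 0 < Real.sqrt Real.pi := Real.sqrt_pos.2 Real.pi_pos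
  have hu : HasDerivAt (fun x => x / Real.sqrt (2 * t) + θ * Real.sqrt (2 * t))
      (1 / Real.sqrt (2 * t)) x := ((hasDerivAt_id x).div_const _).add_const _
  have hl : HasDerivAt (fun x => 2 * θ * x + 2 * θ ^ 2 * t) (2 * θ * 1) x :=
    ((hasDerivAt_id x).const_mul _).add_const _
  have he := (erfc_hasDerivAt_aux (x / Real.sqrt (2 * t) + θ * Real.sqrt (2 * t))).comp x hu
  have h := (hl.exp.const_mul θ).mul he
  have hexp : Real.exp (-x ^ 2 / (2 * t)) = Real.exp (2 * θ * x + 2 * θ ^ 2 * t) *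
      Real.exp (-(x / Real.sqrt (2 * t) + θ * Real.sqrt (2 * t)) ^ 2) := by
    rw [← Real.exp_add]
    congr 1
    have : (x / Real.sqrt (2 * t) + θ * Real.sqrt (2 * t)) ^ 2
        = x ^ 2 / (2 * t) + 2 * θ * x + θ ^ 2 * (2 * t) := by
      rw [add_sq, div_pow, mul_pow, hs2]
      field_simp
    rw [this]
    ring
  refine h.congr_deriv ?_
  rw [hexp]
  unfold gfun
  simp only [Function.comp]
  field_simp
  ring

/-- For `θ > 0` and `t > 0`,
`g_t''(x) = 2θ·g_t'(x) + 2θ·(x/√(2πt³))·exp(−x²/(2t))` for every `x ∈ ℝ`. -/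
theorem gfun_deriv2 (θ t : ℝ) (hθ : 0 < θ) (ht : 0 < t) :
    ∀ x : ℝ, HasDerivAt (deriv (gfun θ t))
      (2 * θ * deriv (gfun θ t) x
        + 2 * θ * (x / Real.sqrt (2 * Real.pi * t ^ 3)) * Real.exp (-x ^ 2 / (2 * t))) x := by
  intro x
  have hd : deriv (gfun θ t) = fun x => 2 * θ * gfun θ t x
      - 2 * θ / (Real.sqrt Real.pi * Real.sqrt (2 * t)) * Real.exp (-x ^ 2 / (2 * t)) :=
    funext fun y => (gfun_hasDerivAt_aux θ t ht y).deriv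
  have h0 := gfun_hasDerivAt_aux θ t ht x
  have hq : HasDerivAt (fun x : ℝ => -x ^ 2 / (2 * t)) (-(2 * x) / (2 * t)) x := by
    have := ((hasDerivAt_pow 2 x).neg).div_const (2 * t)
    simpa using this
  have h := (h0.const_mul (2 * θ)).sub
    (hq.exp.const_mul (2 * θ / (Real.sqrt Real.pi * Real.sqrt (2 * t))))
  rw [← h0.deriv] at h
  have hsq : Real.sqrt (2 * Real.pi * t ^ 3) = Real.sqrt Real.pi * Real.sqrt (2 * t) * t := by
    rw [show 2 * Real.pi * t ^ 3 = Real.pi * (2 * t) * t ^ 2 by ring,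
      Real.sqrt_mul (by positivity), Real.sqrt_mul Real.pi_pos.le, Real.sqrt_sq ht.le]
  have hs : 0 < Real.sqrt (2 * t) := Real.sqrt_pos.2 (by linarith)
  have hp : 0 < Real.sqrt Real.pi := Real.sqrt_pos.2 Real.pi_pos
  have h' := h.congr_deriv (g' := 2 * θ * deriv (gfun θ t) x
        + 2 * θ * (x / Real.sqrt (2 * Real.pi * t ^ 3)) * Real.exp (-x ^ 2 / (2 * t))) (by
    rw [hsq]
    field_simp
    ring)
  refine h'.congr_of_eventuallyEq (Eventually.of_forall fun y => ?_)
  rw [hd]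
  rfl
end

section
/- Let θ > 0, t > 0 and f ∈ 𝒮. Then P_t f is differentiable on (0,∞), has a right derivative at 0, and for every x ≥ 0, (P_t f)'(x) = −∫_0^∞ p_t'(0, y−x)·f(y) dy − ∫_0^∞ p_t'(0, x+y)·f(y) dy + 2·∫_0^∞ g_t'(x+y)·f(y) dy + (1/θ)·g_t'(x)·f(0), where p_t'(0,z) = −(z/t)·(2πt)^{−1/2}·e^{−z²/(2t)} denotes the derivative of z ↦ p_t(0,z). -/
open MeasureTheory Real Filter Set

/-- The Gaussian kernel `p_t(x,y) = (2πt)^{−1/2}·exp(−(y−x)²/(2t))`. -/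
noncomputable def pker (t x y : ℝ) : ℝ :=
  (Real.sqrt (2 * Real.pi * t))⁻¹ * Real.exp (-(y - x) ^ 2 / (2 * t))

/-- The sticky Brownian motion semigroup:
`P_t f(x) = ∫_0^∞ (p_t(x,y) − p_t(x,−y) + 2 g_t(x+y)) f(y) dy + (1/θ) g_t(x) f(0)`. -/
noncomputable def Pt (θ t : ℝ) (f : ℝ → ℝ) (x : ℝ) : ℝ :=
  (∫ y in Set.Ioi (0:ℝ), (pker t x y - pker t x (-y) + 2 * gfun θ t (x + y)) * f y)
    + (1 / θ) * gfun θ t x * f 0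

/-- `f ∈ 𝒮`: `f` is C² on `(0,∞)`, the one-sided limits `f(0⁺)`, `f'(0⁺)`, `f''(0⁺)` exist
and are finite, and `lim_{x→∞} f(x) = 0`. -/
def memS (f : ℝ → ℝ) : Prop :=
  ContDiffOn ℝ 2 f (Set.Ioi 0) ∧
  (∃ a : ℝ, Filter.Tendsto f (nhdsWithin 0 (Set.Ioi 0)) (nhds a)) ∧
  (∃ b : ℝ, Filter.Tendsto (deriv f) (nhdsWithin 0 (Set.Ioi 0)) (nhds b)) ∧
  (∃ c : ℝ, Filter.Tendsto (deriv (deriv f)) (nhdsWithin 0 (Set.Ioi 0)) (nhds c)) ∧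
  Filter.Tendsto f Filter.atTop (nhds 0)

/-- The derivative of `z ↦ p_t(0,z)`: `p_t'(0,z) = −(z/t)·(2πt)^{−1/2}·e^{−z²/(2t)}`. -/
noncomputable def pder (t z : ℝ) : ℝ :=
  -(z / t) * (Real.sqrt (2 * Real.pi * t))⁻¹ * Real.exp (-z ^ 2 / (2 * t))


theorem memS_bdd (f : ℝ → ℝ) (hf : memS f) : ∃ M : ℝ, 0 ≤ M ∧ ∀ y, 0 < y → |f y| ≤ M := by
  obtain ⟨hc, ⟨a, ha⟩, -, -, hinf⟩ := hf
  have h1 : ∀ᶠ y in nhdsWithin 0 (Ioi (0:ℝ)), |f y| < |a| + 1 :=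
    (ha.abs).eventually (gt_mem_nhds (by linarith))
  have h2 : ∀ᶠ y in atTop, |f y| < 1 := by
    have := hinf.abs
    rw [abs_zero] at this
    exact this.eventually (gt_mem_nhds one_pos)
  obtain ⟨δ, hδ, h1⟩ := (mem_nhdsGT_iff_exists_Ioo_subset).1 h1
  obtain ⟨N, h2⟩ := eventually_atTop.1 h2
  have hδ' : 0 < δ := hδ
  obtain ⟨C, hC⟩ := (isCompact_Icc (a := δ) (b := N)).exists_bound_of_continuousOn
    (hc.continuousOn.mono (fun y hy => lt_of_lt_of_le hδ' hy.1))
  refine ⟨max (|a| + 1) (max 1 C), le_max_of_le_right (le_max_of_le_left zero_le_one), ?_⟩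
  intro y hy
  by_cases hyδ : y < δ
  · exact le_max_of_le_left (le_of_lt (h1 ⟨hy, hyδ⟩))
  · by_cases hyN : N ≤ y
    · exact le_max_of_le_right (le_max_of_le_left (h2 y hyN).le)
    · exact le_max_of_le_right (le_max_of_le_right (hC y ⟨by linarith, by linarith⟩))

theorem key_deriv (f k k' : ℝ → ℝ) (s C C' M : ℝ) (hs : |s| = 1)
    (hfm : AEStronglyMeasurable f (volume.restrict (Ioi (0:ℝ))))
    (hM : 0 ≤ M) (hfb : ∀ y, 0 < y → |f y| ≤ M)
    (hk : ∀ z, HasDerivAt k (k' z) z) (hk'c : Continuous k')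
    (hC : 0 ≤ C) (hC' : 0 ≤ C')
    (hkb : ∀ z, |k z| ≤ C * exp (-z)) (hkb' : ∀ z, |k' z| ≤ C' * exp (-z)) (x : ℝ) :
    IntegrableOn (fun y => k (y + s * x) * f y) (Ioi 0) ∧
    HasDerivAt (fun x => ∫ y in Ioi (0:ℝ), k (y + s * x) * f y)
      (s * ∫ y in Ioi (0:ℝ), k' (y + s * x) * f y) x := by
  have hkc : Continuous k := continuous_iff_continuousAt.2 fun z => (hk z).continuousAt
  have hmeas : ∀ x', AEStronglyMeasurable (fun y => k (y + s * x') * f y)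
      (volume.restrict (Ioi (0:ℝ))) := fun x' =>
    (hkc.comp (by fun_prop : Continuous fun y : ℝ => y + s * x')).aestronglyMeasurable.mul hfm
  have hmeas' : AEStronglyMeasurable (fun y => s * k' (y + s * x) * f y)
      (volume.restrict (Ioi (0:ℝ))) :=
    (continuous_const.mul (hk'c.comp
      (by fun_prop : Continuous fun y : ℝ => y + s * x))).aestronglyMeasurable.mul hfm
  have hE : ∀ x' y, |x' - x| < 1 → exp (-(y + s * x')) ≤ exp (|x| + 1) * exp (-y) := by
    intro x' y hx'
    rw [← exp_add]
    apply exp_le_exp.2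
    have h1 : |s * x'| = |x'| := by rw [abs_mul, hs, one_mul]
    have h2 := neg_abs_le (s * x')
    have h3 := abs_sub_abs_le_abs_sub x' x
    linarith
  have hb : ∀ (K : ℝ → ℝ) (D : ℝ), 0 ≤ D → (∀ z, |K z| ≤ D * exp (-z)) → ∀ x' y, |x' - x| < 1 →
      0 < y → |K (y + s * x') * f y| ≤ D * exp (|x| + 1) * M * exp (-y) := by
    intro K D hD hK x' y hx' hy
    rw [abs_mul]
    calc |K (y + s * x')| * |f y| ≤ (D * (exp (|x| + 1) * exp (-y))) * M :=
          mul_le_mul ((hK _).trans (mul_le_mul_of_nonneg_left (hE x' y hx') hD)) (hfb y hy)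
            (abs_nonneg _) (by positivity)
      _ = _ := by ring
  have hint : ∀ D : ℝ, Integrable (fun y => D * exp (-y)) (volume.restrict (Ioi (0:ℝ))) :=
    fun D => (integrableOn_exp_neg_Ioi 0).const_mul D
  have hI : Integrable (fun y => k (y + s * x) * f y) (volume.restrict (Ioi (0:ℝ))) := by
    refine (hint (C * exp (|x| + 1) * M)).mono' (hmeas x) ?_
    filter_upwards [ae_restrict_mem measurableSet_Ioi] with y hy
    exact hb k C hC hkb x y (by simp) hy
  refine ⟨hI, ?_⟩
  have := (hasDerivAt_integral_of_dominated_loc_of_deriv_le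
    (μ := volume.restrict (Ioi (0:ℝ))) (F := fun x' y => k (y + s * x') * f y)
    (F' := fun x' y => s * k' (y + s * x') * f y) (x₀ := x)
    (bound := fun y => C' * exp (|x| + 1) * M * exp (-y))
    (Metric.ball_mem_nhds x one_pos) (Eventually.of_forall hmeas) hI hmeas' ?_
    (hint _) ?_).2
  · rw [← integral_const_mul]
    simpa only [mul_assoc] using this
  · filter_upwards [ae_restrict_mem measurableSet_Ioi] with y hy x' hx'
    rw [Metric.mem_ball, Real.dist_eq] at hx'
    rw [mul_assoc, norm_mul, Real.norm_eq_abs s, hs, one_mul]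
    exact hb k' C' hC' hkb' x' y hx' hy
  · refine Eventually.of_forall fun y x' _ => ?_
    have h1 : HasDerivAt (fun x' => y + s * x') s x' := by
      simpa using ((hasDerivAt_id x').const_mul s).const_add y
    have h2 := ((hk (y + s * x')).comp x' h1).mul_const (f y)
    rw [mul_comm (k' _) s] at h2
    exact h2

theorem int_gauss : Integrable (fun y : ℝ => exp (-y ^ 2)) := by
  simpa using integrable_exp_neg_mul_sq one_pos

theorem erfc_hasDerivAt (x : ℝ) :
    HasDerivAt erfc (-(2 / Real.sqrt Real.pi) * exp (-x ^ 2)) x := by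
  have h : erfc = fun x => (2 / Real.sqrt Real.pi) *
      ((∫ y in Ioi (0:ℝ), exp (-y ^ 2)) - ∫ y in (0:ℝ)..x, exp (-y ^ 2)) := by
    funext u
    rw [erfc, ← intervalIntegral.integral_interval_add_Ioi (a := 0) (b := u)
      int_gauss.integrableOn int_gauss.integrableOn]
    ring
  have hc : Continuous (fun y : ℝ => exp (-y ^ 2)) := by fun_prop
  have h2 := intervalIntegral.integral_hasDerivAt_right (hc.intervalIntegrable 0 x)
    hc.stronglyMeasurable.stronglyMeasurableAtFilter hc.continuousAt
  rw [h]
  refine ((h2.const_sub (∫ y in Ioi (0:ℝ), exp (-y ^ 2))).const_mul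
    (2 / Real.sqrt Real.pi)).congr_deriv ?_
  ring

theorem gauss_le (l u : ℝ) : exp (-u ^ 2) ≤ exp (l ^ 2 / 4) * exp (-l * u) := by
  rw [← exp_add]
  apply exp_le_exp.2
  nlinarith [sq_nonneg (u - l / 2)]

theorem erfc_bound (l : ℝ) (hl : 0 < l) :
    ∃ C, 0 ≤ C ∧ ∀ u, |erfc u| ≤ C * exp (-l * u) := by
  refine ⟨(2 / Real.sqrt Real.pi) * (exp (l ^ 2 / 4) / l), by positivity, fun u => ?_⟩
  have h0 : 0 ≤ ∫ y in Ioi u, exp (-y ^ 2) := integral_nonneg fun y => (exp_pos _).le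
  have h1 : ∫ y in Ioi u, exp (-y ^ 2) ≤ ∫ y in Ioi u, exp (l ^ 2 / 4) * exp (-l * y) :=
    integral_mono int_gauss.integrableOn
      ((integrableOn_exp_mul_Ioi (by linarith) u).const_mul _) (fun y => gauss_le l y)
  rw [integral_const_mul, integral_exp_mul_Ioi (by linarith)] at h1
  rw [erfc, abs_of_nonneg (by positivity), mul_assoc]
  apply mul_le_mul_of_nonneg_left _ (by positivity)
  refine h1.trans (le_of_eq ?_)
  field_simp

noncomputable def gder (θ t x : ℝ) : ℝ :=
  2 * θ * gfun θ t x + θ * exp (2 * θ * x + 2 * θ ^ 2 * t) *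
    (-(2 / Real.sqrt Real.pi) * exp (-(x / Real.sqrt (2 * t) + θ * Real.sqrt (2 * t)) ^ 2) *
      (1 / Real.sqrt (2 * t)))

theorem gfun_hasDerivAt (θ t x : ℝ) : HasDerivAt (gfun θ t) (gder θ t x) x := by
  have h1 : HasDerivAt (fun x => x / Real.sqrt (2 * t) + θ * Real.sqrt (2 * t))
      (1 / Real.sqrt (2 * t)) x := ((hasDerivAt_id x).div_const _).add_const _
  have h2 : HasDerivAt (fun x => 2 * θ * x + 2 * θ ^ 2 * t) (2 * θ) x := by
    simpa using ((hasDerivAt_id x).const_mul (2 * θ)).add_const (2 * θ ^ 2 * t)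
  have h3 := (h2.exp.const_mul θ).mul ((erfc_hasDerivAt _).comp x h1)
  refine h3.congr_deriv ?_
  simp only [gder, gfun, Function.comp]
  ring

theorem gfun_cont (θ t : ℝ) : Continuous (gfun θ t) :=
  continuous_iff_continuousAt.2 fun z => (gfun_hasDerivAt θ t z).continuousAt

theorem gder_cont (θ t : ℝ) : Continuous (gder θ t) := by
  have := gfun_cont θ t
  unfold gder
  fun_prop

theorem g_shape (θ t : ℝ) (hθ : 0 < θ) (ht : 0 < t) (E : ℝ → ℝ) (C : ℝ) (hC : 0 ≤ C)
    (hE : ∀ u, |E u| ≤ C * exp (-((2 * θ + 1) * Real.sqrt (2 * t)) * u)) :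
    ∃ D, 0 ≤ D ∧ ∀ x, |θ * exp (2 * θ * x + 2 * θ ^ 2 * t) *
      E (x / Real.sqrt (2 * t) + θ * Real.sqrt (2 * t))| ≤ D * exp (-x) := by
  refine ⟨θ * C * exp (2 * θ ^ 2 * t - (2 * θ + 1) * θ * (2 * t)), by positivity, fun x => ?_⟩
  rw [abs_mul, abs_of_pos (by positivity)]
  refine (mul_le_mul_of_nonneg_left (hE _) (by positivity)).trans (le_of_eq ?_)
  have h2 : 0 < Real.sqrt (2 * t) := Real.sqrt_pos.2 (by linarith)
  have h3 : Real.sqrt (2 * t) * Real.sqrt (2 * t) = 2 * t := Real.mul_self_sqrt (by linarith)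
  have h4 : -((2 * θ + 1) * Real.sqrt (2 * t)) * (x / Real.sqrt (2 * t) + θ * Real.sqrt (2 * t))
      = -(2 * θ + 1) * x - (2 * θ + 1) * θ * (2 * t) := by
    have h5 : Real.sqrt (2 * t) * (x / Real.sqrt (2 * t)) = x := mul_div_cancel₀ x h2.ne'
    linear_combination (-(2 * θ + 1)) * h5 - (2 * θ + 1) * θ * h3
  rw [h4]
  have h5 : exp (2 * θ * x + 2 * θ ^ 2 * t) *
      exp (-(2 * θ + 1) * x - (2 * θ + 1) * θ * (2 * t)) =
      exp (2 * θ ^ 2 * t - (2 * θ + 1) * θ * (2 * t)) * exp (-x) := by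
    rw [← exp_add, ← exp_add]
    congr 1
    ring
  linear_combination (θ * C) * h5

theorem gfun_bound (θ t : ℝ) (hθ : 0 < θ) (ht : 0 < t) :
    ∃ D, 0 ≤ D ∧ ∀ x, |gfun θ t x| ≤ D * exp (-x) := by
  have h2 : 0 < Real.sqrt (2 * t) := Real.sqrt_pos.2 (by linarith)
  obtain ⟨C, hC, hE⟩ := erfc_bound ((2 * θ + 1) * Real.sqrt (2 * t)) (by positivity)
  exact g_shape θ t hθ ht erfc C hC hE

theorem gder_bound (θ t : ℝ) (hθ : 0 < θ) (ht : 0 < t) :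
    ∃ D, 0 ≤ D ∧ ∀ x, |gder θ t x| ≤ D * exp (-x) := by
  have h2 : 0 < Real.sqrt (2 * t) := Real.sqrt_pos.2 (by linarith)
  obtain ⟨D, hD, hg⟩ := gfun_bound θ t hθ ht
  obtain ⟨D', hD', hg'⟩ := g_shape θ t hθ ht
    (fun u => -(2 / Real.sqrt Real.pi) * exp (-u ^ 2) * (1 / Real.sqrt (2 * t)))
    ((2 / Real.sqrt Real.pi) * exp (((2 * θ + 1) * Real.sqrt (2 * t)) ^ 2 / 4) *
      (1 / Real.sqrt (2 * t))) (by positivity) (by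
      intro u
      have h := gauss_le ((2 * θ + 1) * Real.sqrt (2 * t)) u
      rw [abs_mul, abs_mul, abs_neg, abs_of_pos (by positivity : 0 < 2 / Real.sqrt Real.pi),
        abs_of_pos (exp_pos _), abs_of_pos (by positivity : 0 < 1 / Real.sqrt (2 * t))]
      have h5 := mul_le_mul_of_nonneg_left h
        (by positivity : 0 ≤ (2 / Real.sqrt Real.pi) * (1 / Real.sqrt (2 * t)))
      linarith)
  refine ⟨2 * θ * D + D', by positivity, fun x => ?_⟩
  unfold gder
  refine (abs_add_le _ _).trans ?_
  rw [add_mul]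
  refine add_le_add ?_ (hg' x)
  rw [abs_mul, abs_of_pos (by positivity : 0 < 2 * θ), mul_assoc (2 * θ)]
  exact mul_le_mul_of_nonneg_left (hg x) (by positivity)

theorem pker_hasDerivAt (t z : ℝ) (ht : 0 < t) : HasDerivAt (pker t 0) (pder t z) z := by
  have h1 : HasDerivAt (fun z : ℝ => -(z - 0) ^ 2 / (2 * t)) (-(z / t)) z := by
    refine (((((hasDerivAt_id z).sub_const 0).pow 2).neg).div_const (2 * t)).congr_deriv ?_
    simp
    field_simp
  refine (h1.exp.const_mul ((Real.sqrt (2 * Real.pi * t))⁻¹)).congr_deriv ?_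
  simp only [pder, sub_zero]
  ring

theorem pker_bound (t : ℝ) (ht : 0 < t) (z : ℝ) :
    |pker t 0 z| ≤ ((Real.sqrt (2 * Real.pi * t))⁻¹ * exp (t / 2)) * exp (-z) := by
  rw [pker, abs_of_nonneg (by positivity), mul_assoc (Real.sqrt (2 * Real.pi * t))⁻¹, ← exp_add]
  refine mul_le_mul_of_nonneg_left (exp_le_exp.2 ?_) (by positivity)
  rw [div_le_iff₀ (by positivity)]
  nlinarith [sq_nonneg (z - t)]

theorem pder_bound (t : ℝ) (ht : 0 < t) (z : ℝ) :
    |pder t z| ≤ (1 / t * (Real.sqrt (2 * Real.pi * t))⁻¹ * exp (2 * t)) * exp (-z) := by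
  rw [pder, abs_mul, abs_mul, abs_neg, abs_div, abs_of_pos ht, abs_of_pos (exp_pos _),
    abs_of_nonneg (by positivity : 0 ≤ (Real.sqrt (2 * Real.pi * t))⁻¹)]
  have h1 : |z| ≤ exp |z| := by linarith [add_one_le_exp |z|]
  have h2 : exp |z| * exp (-z ^ 2 / (2 * t)) ≤ exp (2 * t) * exp (-z) := by
    rw [← exp_add, ← exp_add]
    apply exp_le_exp.2
    have h3 : -z ^ 2 / (2 * t) ≤ 2 * t - 2 * |z| := by
      rw [div_le_iff₀ (by positivity)]
      nlinarith [sq_nonneg (|z| - 2 * t), sq_abs z]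
    linarith [le_abs_self z]
  have h4 : |z| * exp (-z ^ 2 / (2 * t)) ≤ exp (2 * t) * exp (-z) :=
    (mul_le_mul_of_nonneg_right h1 (exp_pos _).le).trans h2
  have h5 := mul_le_mul_of_nonneg_left h4
    (by positivity : 0 ≤ 1 / t * (Real.sqrt (2 * Real.pi * t))⁻¹)
  calc _ = 1 / t * (Real.sqrt (2 * Real.pi * t))⁻¹ * (|z| * exp (-z ^ 2 / (2 * t))) := by ring
    _ ≤ _ := h5
    _ = _ := by ring

theorem pder_cont (t : ℝ) : Continuous (pder t) := by
  unfold pder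
  fun_prop

theorem Pt_hasDerivAt (θ t : ℝ) (hθ : 0 < θ) (ht : 0 < t)
    (f : ℝ → ℝ) (hf : memS f) (x : ℝ) :
    HasDerivAt (Pt θ t f)
        (-(∫ y in Set.Ioi (0:ℝ), pder t (y - x) * f y)
          - (∫ y in Set.Ioi (0:ℝ), pder t (x + y) * f y)
          + 2 * (∫ y in Set.Ioi (0:ℝ), deriv (gfun θ t) (x + y) * f y)
          + (1 / θ) * deriv (gfun θ t) x * f 0) x := by
  obtain ⟨M, hM, hfb⟩ := memS_bdd f hf
  have hfm : AEStronglyMeasurable f (volume.restrict (Ioi (0:ℝ))) :=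
    hf.1.continuousOn.aestronglyMeasurable measurableSet_Ioi
  obtain ⟨D, hD, hg⟩ := gfun_bound θ t hθ ht
  obtain ⟨D', hD', hg'⟩ := gder_bound θ t hθ ht
  have kp := fun s hs => key_deriv f (pker t 0) (pder t) s _ _ M hs hfm hM hfb
    (fun z => pker_hasDerivAt t z ht) (pder_cont t) (by positivity) (by positivity)
    (pker_bound t ht) (pder_bound t ht)
  have kg := key_deriv f (gfun θ t) (gder θ t) 1 D D' M (by simp) hfm hM hfb
    (gfun_hasDerivAt θ t) (gder_cont θ t) hD hD' hg hg'
  have k1 := kp (-1) (by simp)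
  have k2 := kp 1 (by simp)
  have hP : Pt θ t f = fun x => ((∫ y in Ioi (0:ℝ), pker t 0 (y + (-1) * x) * f y)
      - (∫ y in Ioi (0:ℝ), pker t 0 (y + 1 * x) * f y)
      + 2 * (∫ y in Ioi (0:ℝ), gfun θ t (y + 1 * x) * f y))
      + (1 / θ) * gfun θ t x * f 0 := by
    funext x
    have hsub : Integrable (fun y => pker t 0 (y + (-1) * x) * f y - pker t 0 (y + 1 * x) * f y)
      (volume.restrict (Ioi (0:ℝ))) := (k1 x).1.sub (k2 x).1
    rw [Pt, ← integral_const_mul, ← integral_sub (k1 x).1 (k2 x).1,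
      ← integral_add hsub ((kg x).1.const_mul 2)]
    congr 1
    apply integral_congr_ae
    refine Eventually.of_forall fun y => ?_
    have e1 : pker t x y = pker t 0 (y + (-1) * x) := by
      unfold pker; congr 3; ring
    have e2 : pker t x (-y) = pker t 0 (y + 1 * x) := by
      unfold pker; congr 3; ring
    have e3 : x + y = y + 1 * x := by ring
    simp only [e1, e2, e3]
    ring
  have hdg : deriv (gfun θ t) = gder θ t := funext fun z => (gfun_hasDerivAt θ t z).deriv
  rw [hP, hdg]
  have := ((((k1 x).2.sub (k2 x).2).add ((kg x).2.const_mul 2)).add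
    (((gfun_hasDerivAt θ t x).const_mul (1 / θ)).mul_const (f 0)))
  refine this.congr_deriv ?_
  have e1 : ∀ y, y + (-1) * x = y - x := fun y => by ring
  have e3 : ∀ y, y + 1 * x = x + y := fun y => by ring
  simp only [e1, e3]
  ring

/-- For `f ∈ 𝒮`, `P_t f` is differentiable on `(0,∞)`, has a right derivative at `0`, and
`(P_t f)'(x) = −∫_0^∞ p_t'(0,y−x) f(y) dy − ∫_0^∞ p_t'(0,x+y) f(y) dy
  + 2 ∫_0^∞ g_t'(x+y) f(y) dy + (1/θ) g_t'(x) f(0)` for every `x ≥ 0`. -/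
theorem Pt_deriv (θ t : ℝ) (hθ : 0 < θ) (ht : 0 < t)
    (f : ℝ → ℝ) (hf : memS f) :
    ∀ x : ℝ, 0 ≤ x →
      HasDerivWithinAt (Pt θ t f)
        (-(∫ y in Set.Ioi (0:ℝ), pder t (y - x) * f y)
          - (∫ y in Set.Ioi (0:ℝ), pder t (x + y) * f y)
          + 2 * (∫ y in Set.Ioi (0:ℝ), deriv (gfun θ t) (x + y) * f y)
          + (1 / θ) * deriv (gfun θ t) x * f 0) (Set.Ici 0) x ∧
      (0 < x → HasDerivAt (Pt θ t f)
        (-(∫ y in Set.Ioi (0:ℝ), pder t (y - x) * f y)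
          - (∫ y in Set.Ioi (0:ℝ), pder t (x + y) * f y)
          + 2 * (∫ y in Set.Ioi (0:ℝ), deriv (gfun θ t) (x + y) * f y)
          + (1 / θ) * deriv (gfun θ t) x * f 0) x) := by
  intro x _
  exact ⟨(Pt_hasDerivAt θ t hθ ht f hf x).hasDerivWithinAt,
    fun _ => Pt_hasDerivAt θ t hθ ht f hf x⟩
end

section
/- Let θ > 0, t > 0 and f ∈ 𝒮. Then the one-sided limits (P_t f)'(0⁺) and (P_t f)''(0⁺) exist and are finite, and (P_t f)''(0⁺) = 2θ·(P_t f)'(0⁺). -/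
open MeasureTheory Real Filter Set

/-- continuous with exponential bound -/
def Dom (h : ℝ → ℝ) : Prop := Continuous h ∧ ∃ C : ℝ, ∀ z, |h z| ≤ C * Real.exp (-z)

noncomputable def Int0 (f h : ℝ → ℝ) (x : ℝ) : ℝ := ∫ y in Set.Ioi (0:ℝ), h (y + x) * f y

noncomputable def ph (t z : ℝ) : ℝ :=
  (Real.sqrt (2 * Real.pi * t))⁻¹ * Real.exp (-z ^ 2 / (2 * t))

lemma Dom.add {h k : ℝ → ℝ} (hh : Dom h) (hk : Dom k) : Dom (fun z => h z + k z) := by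
  obtain ⟨c1, C, hC⟩ := hh
  obtain ⟨c2, D, hD⟩ := hk
  refine ⟨c1.add c2, C + D, fun z => ?_⟩
  have := abs_add_le (h z) (k z)
  have := hC z
  have := hD z
  linarith

lemma Dom.smul {h : ℝ → ℝ} (hh : Dom h) (c : ℝ) : Dom (fun z => c * h z) := by
  obtain ⟨c1, C, hC⟩ := hh
  refine ⟨continuous_const.mul c1, |c| * C, fun z => ?_⟩
  rw [abs_mul, mul_assoc]
  exact mul_le_mul_of_nonneg_left (hC z) (abs_nonneg c)

structure Good (f : ℝ → ℝ) : Prop where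
  meas : AEStronglyMeasurable f (volume.restrict (Set.Ioi (0:ℝ)))
  bdd : ∃ K : ℝ, ∀ y ∈ Set.Ioi (0:ℝ), |f y| ≤ K

lemma memS.good {f : ℝ → ℝ} (hf : memS f) : Good f := by
  obtain ⟨h1, ⟨a, ha⟩, -, -, hinf⟩ := hf
  have hc : ContinuousOn f (Set.Ioi 0) := h1.continuousOn
  refine ⟨hc.aestronglyMeasurable measurableSet_Ioi, ?_⟩
  have e1 : ∀ᶠ y in nhdsWithin (0:ℝ) (Set.Ioi 0), |f y| < |a| + 1 :=
    ha.abs.eventually_lt_const (by linarith)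
  have e2 : ∀ᶠ y in atTop, |f y| < 1 := hinf.abs.eventually_lt_const (by simp)
  obtain ⟨N, hN⟩ := eventually_atTop.1 e2
  obtain ⟨u, hu, hu'⟩ := (mem_nhdsGT_iff_exists_Ioo_subset).1 e1
  have hu0 : (0:ℝ) < u := hu
  have hcc : ContinuousOn f (Set.Icc u N) := hc.mono (fun y hy => lt_of_lt_of_le hu0 hy.1)
  obtain ⟨K, hK⟩ := isCompact_Icc.exists_bound_of_continuousOn hcc
  refine ⟨max (|a| + 1) (max 1 K), fun y hy => ?_⟩
  by_cases c1 : y < u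
  · have : |f y| < |a| + 1 := hu' ⟨hy, c1⟩
    exact this.le.trans (le_max_left _ _)
  · by_cases c2 : N ≤ y
    · exact (hN y c2).le.trans ((le_max_left _ _).trans (le_max_right _ _))
    · have := hK y ⟨not_lt.1 c1, (not_le.1 c2).le⟩
      exact this.trans ((le_max_right _ _).trans (le_max_right _ _))

lemma Good.measF {f h : ℝ → ℝ} (hf : Good f) (hh : Dom h) (x : ℝ) :
    AEStronglyMeasurable (fun y => h (y + x) * f y) (volume.restrict (Set.Ioi (0:ℝ))) := by
  have : Continuous (fun y => h (y + x)) := hh.1.comp (continuous_id.add continuous_const)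
  exact this.aestronglyMeasurable.mul hf.meas

lemma Good.bound {f h : ℝ → ℝ} (hf : Good f) (hh : Dom h) (x₀ : ℝ) :
    ∃ C : ℝ, ∀ᵐ y ∂(volume.restrict (Set.Ioi (0:ℝ))), ∀ x ∈ Metric.ball x₀ 1,
      ‖h (y + x) * f y‖ ≤ C * Real.exp (-y) := by
  obtain ⟨K, hK⟩ := hf.bdd
  obtain ⟨_, C, hC⟩ := hh
  have hC0 : 0 ≤ C := by
    have := (abs_nonneg _).trans (hC 0)
    simpa using this
  refine ⟨C * Real.exp (-x₀ + 1) * K, ?_⟩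
  filter_upwards [ae_restrict_mem measurableSet_Ioi] with y hy x hx
  rw [norm_mul]
  have hx' : x₀ - 1 < x := by
    rw [Metric.mem_ball, Real.dist_eq, abs_lt] at hx
    linarith
  have h1 : ‖h (y + x)‖ ≤ C * (Real.exp (-x₀ + 1) * Real.exp (-y)) := by
    refine (hC (y + x)).trans (mul_le_mul_of_nonneg_left ?_ hC0)
    rw [← Real.exp_add]
    exact Real.exp_le_exp.2 (by linarith)
  have h2 : ‖f y‖ ≤ K := hK y hy
  calc ‖h (y + x)‖ * ‖f y‖ ≤ (C * (Real.exp (-x₀ + 1) * Real.exp (-y))) * K :=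
        mul_le_mul h1 h2 (norm_nonneg _) (by positivity)
    _ = _ := by ring

lemma Good.int {f h : ℝ → ℝ} (hf : Good f) (hh : Dom h) (x : ℝ) :
    IntegrableOn (fun y => h (y + x) * f y) (Set.Ioi (0:ℝ)) := by
  obtain ⟨C, hC⟩ := hf.bound hh x
  refine Integrable.mono' ((integrableOn_exp_neg_Ioi 0).const_mul C) (hf.measF hh x) ?_
  filter_upwards [hC] with y hy
  exact hy x (Metric.mem_ball_self one_pos)

lemma Int0_cont {f h : ℝ → ℝ} (hf : Good f) (hh : Dom h) : Continuous (Int0 f h) := by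
  rw [continuous_iff_continuousAt]
  intro x
  obtain ⟨C, hC⟩ := hf.bound hh x
  refine continuousAt_of_dominated (bound := fun y => C * Real.exp (-y))
    (Eventually.of_forall fun x => hf.measF hh x) ?_
    ((integrableOn_exp_neg_Ioi 0).const_mul C) ?_
  · filter_upwards [Metric.ball_mem_nhds x one_pos] with z hz
    filter_upwards [hC] with y hy
    exact hy z hz
  · refine Eventually.of_forall fun y => ?_
    exact ((hh.1.comp (continuous_const.add continuous_id)).mul continuous_const).continuousAt

lemma Int0_deriv {f h h' : ℝ → ℝ} (hf : Good f) (hh : Dom h) (hh' : Dom h')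
    (hd : ∀ z, HasDerivAt h (h' z) z) (x : ℝ) : HasDerivAt (Int0 f h) (Int0 f h' x) x := by
  obtain ⟨C, hC⟩ := hf.bound hh' x
  refine (hasDerivAt_integral_of_dominated_loc_of_deriv_le (F := fun x y => h (y + x) * f y)
    (F' := fun x y => h' (y + x) * f y)
    (bound := fun y => C * Real.exp (-y)) (Metric.ball_mem_nhds x one_pos)
    (Eventually.of_forall fun x => hf.measF hh x) (hf.int hh x) (hf.measF hh' x) hC
    ((integrableOn_exp_neg_Ioi 0).const_mul C) ?_).2
  refine Eventually.of_forall fun y z _ => ?_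
  exact (HasDerivAt.comp_const_add y z (hd (y + z))).mul_const (f y)

lemma Int0_lin {f h k : ℝ → ℝ} (hf : Good f) (hh : Dom h) (hk : Dom k) (a b x : ℝ) :
    Int0 f (fun z => a * h z + b * k z) x = a * Int0 f h x + b * Int0 f k x := by
  unfold Int0
  rw [← integral_const_mul, ← integral_const_mul, ← integral_add]
  · congr 1
    ext y
    ring
  · exact (hf.int hh x).const_mul a
  · exact (hf.int hk x).const_mul b

lemma gauss_bound {t : ℝ} (ht : 0 < t) (z : ℝ) :
    (1 + z ^ 2) * Real.exp (-z ^ 2 / (2 * t)) ≤ (1 + 4 * t) * Real.exp t * Real.exp (-z) := by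
  have h1 : z ^ 2 / (4 * t) ≤ Real.exp (z ^ 2 / (4 * t)) := by
    have := Real.add_one_le_exp (z ^ 2 / (4 * t))
    linarith
  have h0 : 1 ≤ Real.exp (z ^ 2 / (4 * t)) := Real.one_le_exp (by positivity)
  have h2 : 1 + z ^ 2 ≤ (1 + 4 * t) * Real.exp (z ^ 2 / (4 * t)) := by
    have : z ^ 2 ≤ 4 * t * Real.exp (z ^ 2 / (4 * t)) := by
      rw [div_le_iff₀ (by positivity)] at h1
      linarith
    linarith
  calc (1 + z ^ 2) * Real.exp (-z ^ 2 / (2 * t))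
      ≤ (1 + 4 * t) * Real.exp (z ^ 2 / (4 * t)) * Real.exp (-z ^ 2 / (2 * t)) := by gcongr
    _ = (1 + 4 * t) * Real.exp (z ^ 2 / (4 * t) + -z ^ 2 / (2 * t)) := by
        rw [Real.exp_add]; ring
    _ ≤ (1 + 4 * t) * Real.exp (t + -z) := by
        refine mul_le_mul_of_nonneg_left (Real.exp_le_exp.2 ?_) (by positivity)
        have : t + -z - (z ^ 2 / (4 * t) + -z ^ 2 / (2 * t)) = (z - 2 * t) ^ 2 / (4 * t) := by
          field_simp; ring
        have h3 : 0 ≤ (z - 2 * t) ^ 2 / (4 * t) := by positivity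
        linarith
    _ = _ := by rw [Real.exp_add]; ring

lemma dom_poly {t : ℝ} (ht : 0 < t) (q : ℝ → ℝ) (hq : Continuous q) (K : ℝ)
    (hK : ∀ z, |q z| ≤ K * (1 + z ^ 2)) : Dom (fun z => q z * ph t z) := by
  refine ⟨by unfold ph; fun_prop, K * (Real.sqrt (2 * Real.pi * t))⁻¹ * ((1 + 4 * t) * Real.exp t),
    fun z => ?_⟩
  have hK0 : 0 ≤ K := by simpa using (abs_nonneg _).trans (hK 0)
  unfold ph
  rw [abs_mul, abs_of_nonneg (a := (Real.sqrt (2 * Real.pi * t))⁻¹ * _) (by positivity)]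
  calc |q z| * ((Real.sqrt (2 * Real.pi * t))⁻¹ * Real.exp (-z ^ 2 / (2 * t)))
      ≤ (K * (1 + z ^ 2)) * ((Real.sqrt (2 * Real.pi * t))⁻¹ * Real.exp (-z ^ 2 / (2 * t))) := by
        gcongr; exact hK z
    _ = K * (Real.sqrt (2 * Real.pi * t))⁻¹ * ((1 + z ^ 2) * Real.exp (-z ^ 2 / (2 * t))) := by ring
    _ ≤ K * (Real.sqrt (2 * Real.pi * t))⁻¹ * ((1 + 4 * t) * Real.exp t * Real.exp (-z)) :=
        mul_le_mul_of_nonneg_left (gauss_bound ht z) (by positivity)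
    _ = _ := by ring

lemma dom_ph {t : ℝ} (ht : 0 < t) : Dom (ph t) := by
  have := dom_poly ht (fun _ => 1) continuous_const 1 (fun z => by simp; positivity)
  simpa using this

lemma dom_ph1 {t : ℝ} (ht : 0 < t) : Dom (fun z => (-z / t) * ph t z) := by
  refine dom_poly ht (fun z => -z / t) (by fun_prop) (1 / t) (fun z => ?_)
  rw [abs_div, abs_neg, abs_of_pos ht, div_mul_eq_mul_div, one_mul]
  gcongr
  nlinarith [sq_abs z, sq_nonneg (|z| - 1)]

lemma dom_ph2 {t : ℝ} (ht : 0 < t) : Dom (fun z => (z ^ 2 / t ^ 2 - 1 / t) * ph t z) := by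
  refine dom_poly ht (fun z => z ^ 2 / t ^ 2 - 1 / t) (by fun_prop) (1 / t ^ 2 + 1 / t)
    (fun z => ?_)
  have h1 : 0 ≤ z ^ 2 / t ^ 2 := by positivity
  have h2 : 0 < 1 / t := by positivity
  have h3 : 0 < 1 / t ^ 2 := by positivity
  have h4 : 0 ≤ z ^ 2 * (1 / t) := by positivity
  have h5 : z ^ 2 / t ^ 2 = z ^ 2 * (1 / t ^ 2) := by ring
  rw [abs_le]
  constructor <;> nlinarith

lemma ph_deriv {t : ℝ} (ht : 0 < t) (z : ℝ) : HasDerivAt (ph t) ((-z / t) * ph t z) z := by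
  unfold ph
  have h1 : HasDerivAt (fun z : ℝ => -z ^ 2 / (2 * t)) (-z / t) z := by
    refine (((hasDerivAt_pow 2 z).neg).div_const (2 * t)).congr_deriv ?_
    norm_num
    field_simp
  refine (h1.exp.const_mul ((Real.sqrt (2 * Real.pi * t))⁻¹)).congr_deriv ?_
  ring

lemma ph1_deriv {t : ℝ} (ht : 0 < t) (z : ℝ) :
    HasDerivAt (fun z => (-z / t) * ph t z) ((z ^ 2 / t ^ 2 - 1 / t) * ph t z) z := by
  have h1 : HasDerivAt (fun z : ℝ => -z / t) (-1 / t) z := (hasDerivAt_id z).neg.div_const t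
  refine (h1.mul (ph_deriv ht z)).congr_deriv ?_
  field_simp
  ring

lemma gauss_int : Integrable (fun y : ℝ => Real.exp (-y ^ 2)) := by
  simpa using integrable_exp_neg_mul_sq (b := 1) one_pos

lemma erfc_deriv (z : ℝ) : HasDerivAt erfc (-(2 / Real.sqrt Real.pi) * Real.exp (-z ^ 2)) z := by
  have hc : Continuous (fun y : ℝ => Real.exp (-y ^ 2)) := by fun_prop
  have e : erfc = fun x => (2 / Real.sqrt Real.pi) *
      ((∫ y in Set.Ioi (0:ℝ), Real.exp (-y ^ 2)) - ∫ y in (0:ℝ)..x, Real.exp (-y ^ 2)) := by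
    ext x
    unfold erfc
    rw [← intervalIntegral.integral_interval_add_Ioi (a := 0) (b := x) gauss_int.integrableOn
      gauss_int.integrableOn]
    ring
  rw [e]
  have h1 : HasDerivAt (fun x => ∫ y in (0:ℝ)..x, Real.exp (-y ^ 2)) (Real.exp (-z ^ 2)) z :=
    intervalIntegral.integral_hasDerivAt_right (hc.intervalIntegrable _ _)
      hc.stronglyMeasurable.stronglyMeasurableAtFilter hc.continuousAt
  refine ((h1.const_sub (∫ y in Set.Ioi (0:ℝ), Real.exp (-y ^ 2))).const_mul
    (2 / Real.sqrt Real.pi)).congr_deriv ?_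
  ring

lemma erfc_bound_s12 {k : ℝ} (hk : 0 < k) (z : ℝ) :
    |erfc z| ≤ (2 / Real.sqrt Real.pi) * (Real.exp (k ^ 2 / 4) / k) * Real.exp (-k * z) := by
  unfold erfc
  have hnn : 0 ≤ ∫ y in Set.Ioi z, Real.exp (-y ^ 2) := integral_nonneg fun y => (Real.exp_pos _).le
  rw [abs_of_nonneg (by positivity), mul_assoc]
  refine mul_le_mul_of_nonneg_left ?_ (by positivity)
  calc ∫ y in Set.Ioi z, Real.exp (-y ^ 2)
      ≤ ∫ y in Set.Ioi z, Real.exp (k ^ 2 / 4) * Real.exp (-k * y) := by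
        refine integral_mono gauss_int.integrableOn
          ((integrableOn_exp_mul_Ioi (neg_lt_zero.2 hk) z).const_mul _) fun y => ?_
        simp only
        rw [← Real.exp_add]
        refine Real.exp_le_exp.2 ?_
        nlinarith [sq_nonneg (y - k / 2)]
    _ = _ := by
        rw [integral_const_mul, integral_exp_mul_Ioi (neg_lt_zero.2 hk) z]
        field_simp

lemma g_deriv {θ t : ℝ} (ht : 0 < t) (z : ℝ) :
    HasDerivAt (gfun θ t) (2 * θ * gfun θ t z + (-2 * θ) * ph t z) z := by
  have hs : 0 < Real.sqrt (2 * t) := by positivity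
  have hs2 : Real.sqrt (2 * t) ^ 2 = 2 * t := Real.sq_sqrt (by positivity)
  have h1 : HasDerivAt (fun x : ℝ => 2 * θ * x + 2 * θ ^ 2 * t) (2 * θ) z := by
    simpa using ((hasDerivAt_id z).const_mul (2 * θ)).add_const (2 * θ ^ 2 * t)
  have h2 : HasDerivAt (fun x : ℝ => x / Real.sqrt (2 * t) + θ * Real.sqrt (2 * t))
      (1 / Real.sqrt (2 * t)) z :=
    ((hasDerivAt_id z).div_const _).add_const _
  have h3 := (erfc_deriv (z / Real.sqrt (2 * t) + θ * Real.sqrt (2 * t))).comp z h2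
  have h4 := (h1.exp.const_mul θ).mul h3
  refine HasDerivAt.congr_deriv (f := gfun θ t) h4 ?_
  have key : Real.exp (2 * θ * z + 2 * θ ^ 2 * t) *
      Real.exp (-(z / Real.sqrt (2 * t) + θ * Real.sqrt (2 * t)) ^ 2) =
      Real.exp (-z ^ 2 / (2 * t)) := by
    rw [← Real.exp_add]
    congr 1
    have : (z / Real.sqrt (2 * t) + θ * Real.sqrt (2 * t)) ^ 2 =
        z ^ 2 / Real.sqrt (2 * t) ^ 2 + 2 * z * θ + θ ^ 2 * Real.sqrt (2 * t) ^ 2 := by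
      field_simp; ring
    rw [this, hs2]
    ring
  have hp : Real.sqrt (2 * Real.pi * t) = Real.sqrt Real.pi * Real.sqrt (2 * t) := by
    rw [← Real.sqrt_mul Real.pi_pos.le]; congr 1; ring
  unfold ph gfun
  rw [← key, hp]
  simp only [Function.comp]
  field_simp

lemma dom_g {θ t : ℝ} (hθ : 0 < θ) (ht : 0 < t) : Dom (gfun θ t) := by
  have hs : 0 < Real.sqrt (2 * t) := by positivity
  refine ⟨continuous_iff_continuousAt.2 fun z => (g_deriv ht z).continuousAt, ?_⟩
  set k : ℝ := (2 * θ + 1) * Real.sqrt (2 * t) with hk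
  have hk0 : 0 < k := by positivity
  refine ⟨θ * Real.exp (2 * θ ^ 2 * t) * ((2 / Real.sqrt Real.pi) * (Real.exp (k ^ 2 / 4) / k)) *
    Real.exp (-k * (θ * Real.sqrt (2 * t))), fun z => ?_⟩
  unfold gfun
  rw [abs_mul, abs_of_nonneg (a := θ * _) (by positivity)]
  refine (mul_le_mul_of_nonneg_left (erfc_bound_s12 hk0 _) (by positivity)).trans (le_of_eq ?_)
  have e1 : Real.exp (-k * (z / Real.sqrt (2 * t) + θ * Real.sqrt (2 * t))) =
      Real.exp (-(2 * θ * z)) * Real.exp (-z) * Real.exp (-k * (θ * Real.sqrt (2 * t))) := by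
    rw [← Real.exp_add, ← Real.exp_add]
    congr 1
    rw [hk]
    field_simp
    ring
  have e2 : Real.exp (2 * θ * z) * Real.exp (-(2 * θ * z)) = 1 := by
    rw [← Real.exp_add]; simp
  rw [e1, Real.exp_add (2 * θ * z)]
  linear_combination (θ * Real.exp (2 * θ ^ 2 * t) *
    ((2 / Real.sqrt Real.pi) * (Real.exp (k ^ 2 / 4) / k)) *
    Real.exp (-k * (θ * Real.sqrt (2 * t))) * Real.exp (-z)) * e2

lemma Pt_eq {θ t : ℝ} (hθ : 0 < θ) (ht : 0 < t) {f : ℝ → ℝ} (hf : Good f) (x : ℝ) :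
    Pt θ t f x = Int0 f (ph t) (-x) - Int0 f (ph t) x + 2 * Int0 f (gfun θ t) x
      + (1 / θ) * f 0 * gfun θ t x := by
  have i1 := hf.int (dom_ph ht) (-x)
  have i2 := hf.int (dom_ph ht) x
  have i3 := (hf.int (dom_g hθ ht) x).const_mul 2
  unfold Pt Int0
  rw [← integral_const_mul, ← integral_sub i1 i2]
  have i4 : Integrable (fun y => ph t (y + -x) * f y - ph t (y + x) * f y)
    (volume.restrict (Set.Ioi (0:ℝ))) := i1.sub i2
  rw [← integral_add i4 i3]
  congr 1
  · congr 1
    ext y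
    have a1 : pker t x y = ph t (y + -x) := by unfold pker ph; ring_nf
    have a2 : pker t x (-y) = ph t (y + x) := by unfold pker ph; ring_nf
    rw [a1, a2, add_comm x y]
    ring
  · ring

/-- For `f ∈ 𝒮`, the one-sided limits `(P_t f)'(0⁺)` and `(P_t f)''(0⁺)` exist and are
finite, and `(P_t f)''(0⁺) = 2θ·(P_t f)'(0⁺)`. -/
theorem Pt_boundary_condition (θ t : ℝ) (hθ : 0 < θ) (ht : 0 < t)
    (f : ℝ → ℝ) (hf : memS f) :
    ∃ L M : ℝ,
      Filter.Tendsto (deriv (Pt θ t f)) (nhdsWithin 0 (Set.Ioi 0)) (nhds L) ∧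
      Filter.Tendsto (deriv (deriv (Pt θ t f))) (nhdsWithin 0 (Set.Ioi 0)) (nhds M) ∧
      M = 2 * θ * L := by
  have hg := hf.good
  set A := Int0 f (ph t) with hA
  set A1 := Int0 f (fun z => (-z / t) * ph t z) with hA1
  set A2 := Int0 f (fun z => (z ^ 2 / t ^ 2 - 1 / t) * ph t z) with hA2
  set G := Int0 f (gfun θ t) with hG
  have dA : ∀ x, HasDerivAt A (A1 x) x := Int0_deriv hg (dom_ph ht) (dom_ph1 ht) (ph_deriv ht)
  have dA1 : ∀ x, HasDerivAt A1 (A2 x) x := Int0_deriv hg (dom_ph1 ht) (dom_ph2 ht) (ph1_deriv ht)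
  have cA2 : Continuous A2 := Int0_cont hg (dom_ph2 ht)
  have dG : ∀ x, HasDerivAt G (2 * θ * G x + (-2 * θ) * A x) x := by
    intro x
    rw [hG, hA, ← Int0_lin hg (dom_g hθ ht) (dom_ph ht)]
    exact Int0_deriv hg (dom_g hθ ht)
      (((dom_g hθ ht).smul _).add ((dom_ph ht).smul _)) (g_deriv ht) x
  have dg : ∀ x, HasDerivAt (gfun θ t) (2 * θ * gfun θ t x + (-2 * θ) * ph t x) x := g_deriv ht
  have dp : ∀ x, HasDerivAt (ph t) ((-x / t) * ph t x) x := ph_deriv ht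
  have cA : Continuous A := continuous_iff_continuousAt.2 fun x => (dA x).continuousAt
  have cA1 : Continuous A1 := continuous_iff_continuousAt.2 fun x => (dA1 x).continuousAt
  have cG : Continuous G := continuous_iff_continuousAt.2 fun x => (dG x).continuousAt
  have cg : Continuous (gfun θ t) := (dom_g hθ ht).1
  have cp : Continuous (ph t) := (dom_ph ht).1
  have nA : ∀ x, HasDerivAt (fun x => A (-x)) (-A1 (-x)) x := fun x => by
    exact HasDerivAt.congr_deriv (f := fun x => A (-x))
      ((dA (-x)).comp x (hasDerivAt_neg x)) (by ring)
  have nA1 : ∀ x, HasDerivAt (fun x => A1 (-x)) (-A2 (-x)) x := fun x => by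
    exact HasDerivAt.congr_deriv (f := fun x => A1 (-x))
      ((dA1 (-x)).comp x (hasDerivAt_neg x)) (by ring)
  have e0 : Pt θ t f = fun x => A (-x) - A x + 2 * G x + (1 / θ) * f 0 * gfun θ t x :=
    funext fun x => Pt_eq hθ ht hg x
  have e1 : deriv (Pt θ t f) = fun x => -A1 (-x) - A1 x + 2 * (2 * θ * G x + (-2 * θ) * A x)
      + (1 / θ) * f 0 * (2 * θ * gfun θ t x + (-2 * θ) * ph t x) := by
    rw [e0]
    exact funext fun x => ((((nA x).sub (dA x)).add ((dG x).const_mul 2)).add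
      ((dg x).const_mul ((1 / θ) * f 0))).deriv
  have e2 : deriv (deriv (Pt θ t f)) = fun x => -(-A2 (-x)) - A2 x
      + 2 * (2 * θ * (2 * θ * G x + (-2 * θ) * A x) + (-2 * θ) * A1 x)
      + (1 / θ) * f 0 * (2 * θ * (2 * θ * gfun θ t x + (-2 * θ) * ph t x)
        + (-2 * θ) * ((-x / t) * ph t x)) := by
    rw [e1]
    exact funext fun x => ((((nA1 x).neg.sub (dA1 x)).add
      ((((dG x).const_mul (2 * θ)).add ((dA x).const_mul (-2 * θ))).const_mul 2)).add
      ((((dg x).const_mul (2 * θ)).add ((dp x).const_mul (-2 * θ))).const_mul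
        ((1 / θ) * f 0))).deriv
  have c1 : Continuous (deriv (Pt θ t f)) := by rw [e1]; fun_prop
  have c2 : Continuous (deriv (deriv (Pt θ t f))) := by rw [e2]; fun_prop
  refine ⟨_, _, c1.continuousAt.tendsto.mono_left nhdsWithin_le_nhds,
    c2.continuousAt.tendsto.mono_left nhdsWithin_le_nhds, ?_⟩
  rw [e2, e1]
  simp only [neg_zero, zero_div]
  ring
end
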